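/- Let n ≥ 3 and consider the weight vector L = (1,1,…,1) in ℙⁿ, i.e., a configuration consisting of exactly one generic linear subspace of each dimension i for 0 ≤ i ≤ n−2. Then L is feasible for 3 ≤ n ≤ 5, and L is non-feasible for n ≥ 8. -/

import Mathlib

noncomputable section

/-- Projective space `ℙⁿ(ℂ)`, the projectivization of `ℂ^{n+1}`. -/
abbrev PP (k : ℕ) := Projectivization ℂ (Fin (k + 1) → ℂ)

/-- The vector of the monomials `s^k t^(n-k)`, used to parametrize rational normal curves. -/
def veron (n : ℕ) (v : Fin 2 → ℂ) : Fin (n + 1) → ℂ :=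
  fun k => v 0 ^ (k : ℕ) * v 1 ^ (n - (k : ℕ))

/-- `C ⊆ ℙⁿ` is a rational normal curve if it is the image of `[s:t] ↦ [F₀(s,t):⋯:Fₙ(s,t)]`
for a basis `F₀,…,Fₙ` of the degree-`n` binary forms; such a basis is encoded by an
invertible matrix of coefficients applied to the monomial vector `veron`. -/
def IsRNC (n : ℕ) (C : Set (PP n)) : Prop :=
  ∃ M : Matrix (Fin (n + 1)) (Fin (n + 1)) ℂ, IsUnit M.det ∧
    C = {P : PP n | ∃ v : Fin 2 → ℂ, v ≠ 0 ∧ ∃ c : ℂ, c ≠ 0 ∧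
      P.rep = c • M.mulVec (veron n v)}

/-- The linear subspace of `ℙⁿ` given as the projectivization of the column span of a matrix. -/
def projSet {n m : ℕ} (A : Matrix (Fin (n + 1)) (Fin m) ℂ) : Set (PP n) :=
  {P : PP n | P.rep ∈ Submodule.span ℂ (Set.range fun j => fun r => A r j)}

/-- A configuration of weight `L = (l₀,…,l_{n-2})`: for each `i`, `lᵢ` matrices of size
`(n+1) × (i+1)`, whose column spans give the `i`-dimensional components. -/
abbrev Config (n : ℕ) (L : Fin (n - 1) → ℕ) :=
  (i : Fin (n - 1)) → Fin (L i) → Matrix (Fin (n + 1)) (Fin (i.1 + 1)) ℂ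

/-- All matrices of the configuration have full rank. -/
def FullRank {n : ℕ} {L : Fin (n - 1) → ℕ} (A : Config n L) : Prop :=
  ∀ i j, (A i j).rank = i.1 + 1

/-- A curve `C` maximally intersects the configuration `A`: it meets every `i`-dimensional
component in exactly `i+1` distinct points. -/
def MaxIntersects {n : ℕ} {L : Fin (n - 1) → ℕ} (C : Set (PP n)) (A : Config n L) : Prop :=
  ∀ i j, (C ∩ projSet (A i j)).ncard = i.1 + 1

/-- A property `Q` holds for a generic configuration of weight `L`: there is a nonzero
polynomial in the matrix entries such that `Q` holds at every full-rank tuple of matrices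
where the polynomial does not vanish. -/
def GenHolds (n : ℕ) (L : Fin (n - 1) → ℕ) (Q : Config n L → Prop) : Prop :=
  ∃ F : MvPolynomial ((i : Fin (n - 1)) × (Fin (L i) × Fin (n + 1) × Fin (i.1 + 1))) ℂ,
    F ≠ 0 ∧ ∀ A : Config n L, FullRank A →
      MvPolynomial.eval (fun p => A p.1 p.2.1 p.2.2.1 p.2.2.2) F ≠ 0 → Q A

/-- `L` is feasible: a generic configuration of weight `L` is maximally intersected
by some rational normal curve. -/
def Feasible (n : ℕ) (L : Fin (n - 1) → ℕ) : Prop :=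
  GenHolds n L fun A => ∃ C : Set (PP n), IsRNC n C ∧ MaxIntersects C A

/-- `L` is non-feasible: for a generic configuration of weight `L`, no rational normal
curve maximally intersects it. -/
def NonFeasible (n : ℕ) (L : Fin (n - 1) → ℕ) : Prop :=
  GenHolds n L fun A => ¬ ∃ C : Set (PP n), IsRNC n C ∧ MaxIntersects C A

/-!
For `n ≤ 5`, any two configurations of weight `(1, …, 1)` whose columns are in linearly general
position differ by a linear automorphism of `ℂ^{n+1}`. One such configuration is spanned by points
of the standard rational normal curve, and an automorphism carrying it to a given configuration
carries that curve to a rational normal curve maximally intersecting the given one. For `n = 3` the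
columns are linearly independent; for `n = 4` the line and the plane are complementary and the point
has nonzero components in both; for `n = 5` the point, the line and the plane span, and the solid is
the kernel of the quotient map by it, which can be prescribed separately on each of these three.

Non-feasibility is a parameter count. If a rational normal curve with coefficient matrix `M`
maximally intersects a configuration, then each of its matrices is `M V B`, where the columns of
`V` are the points of intersection on the standard curve and `B` is square. After choosing an affine
chart of `ℙ¹` for each of these points, the entries are polynomials in fewer parameters than there
are entries, hence satisfy a nontrivial polynomial relation.
-/

open Module Submodule Finset

section LinearAlgebra

variable {K V : Type*} [Field K] [AddCommGroup V] [Module K V]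

/-- `w` is in linearly general position: as many of the vectors `w x` as the dimension allows are
always linearly independent. -/
def LinearlyGeneral (K : Type*) {V κ : Type*} [Field K] [AddCommGroup V] [Module K V]
    (w : κ → V) : Prop :=
  ∀ s : Finset κ, #s ≤ finrank K V → LinearIndepOn K w s

namespace LinearlyGeneral

variable {κ : Type*} {w : κ → V}

theorem comp {κ' : Type*} (hw : LinearlyGeneral K w) {f : κ' → κ} (hf : f.Injective) :
    LinearlyGeneral K (w ∘ f) := fun s hs => by
  have := hw (s.map ⟨f, hf⟩) ((card_map _).trans_le hs)
  rw [coe_map] at this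
  exact this.comp_of_image hf.injOn

theorem linearIndependent [Fintype κ] (hw : LinearlyGeneral K w)
    (h : Fintype.card κ ≤ finrank K V) : LinearIndependent K w := by
  rw [← linearIndepOn_univ_iff, ← coe_univ]
  exact hw _ h

theorem mem_span_image_iff (hw : LinearlyGeneral K w) {s : Finset κ} (hs : #s < finrank K V)
    {x : κ} : w x ∈ span K (w '' s) ↔ x ∈ s := by
  classical
  refine ⟨fun h => by_contra fun hx => ?_, fun hx => subset_span ⟨x, hx, rfl⟩⟩
  have hli : LinearIndepOn K w (insert x s : Set κ) := by
    simpa using hw (insert x s) ((card_insert_le x s).trans hs)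
  exact hli.notMem_span_of_insert (mod_cast hx) h

theorem disjoint_span_image (hw : LinearlyGeneral K w) {s t : Finset κ} (hst : Disjoint s t)
    (h : #s + #t ≤ finrank K V) : Disjoint (span K (w '' s)) (span K (w '' t)) := by
  classical
  have hli := hw (s ∪ t) ((card_union_of_disjoint hst).trans_le h)
  rw [coe_union, linearIndepOn_union_iff (mod_cast hst)] at hli
  exact hli.2.2

theorem finrank_span_image (hw : LinearlyGeneral K w) {s : Finset κ} (hs : #s ≤ finrank K V) :
    finrank K (span K (w '' s)) = #s := by
  rw [Set.image_eq_range, finrank_span_eq_card (hw s hs)]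
  simp

theorem span_image_eq_top [FiniteDimensional K V] (hw : LinearlyGeneral K w) {s : Finset κ}
    (hs : finrank K V ≤ #s) : span K (w '' s) = ⊤ := by
  obtain ⟨t, hts, ht⟩ := exists_subset_card_eq hs
  refine eq_top_mono (span_mono (Set.image_mono (coe_subset.2 hts))) ?_
  exact eq_top_of_finrank_eq ((hw.finrank_span_image ht.le).trans ht)

end LinearlyGeneral

theorem exists_linearEquiv_apply_eq {ι : Type*} [FiniteDimensional K V] {v w : ι → V}
    (hv : LinearIndependent K v) (hw : LinearIndependent K w) :
    ∃ g : V ≃ₗ[K] V, ∀ i, g (v i) = w i := by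
  obtain ⟨g, hg⟩ := exists_linearEquiv_restrict_eq
    (hv.linearCombinationEquiv.symm ≪≫ₗ hw.linearCombinationEquiv)
  refine ⟨g, fun i => ?_⟩
  have := hg (hv.linearCombinationEquiv (Finsupp.single i 1))
  simpa using this.symm

theorem exists_linearEquiv_apply_eq_of_ne_zero {V V' : Type*} [AddCommGroup V] [Module K V]
    [AddCommGroup V'] [Module K V'] [FiniteDimensional K V] [FiniteDimensional K V']
    (h : finrank K V = finrank K V') {v : V} {v' : V'} (hv : v ≠ 0) (hv' : v' ≠ 0) :
    ∃ g : V ≃ₗ[K] V', g v = v' := by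
  let e := LinearEquiv.ofFinrankEq V V' h
  obtain ⟨g, hg⟩ := exists_linearEquiv_apply_eq
    (linearIndependent_unique_iff (R := K) (v := fun _ : Unit => e v) |>.2 (e.map_ne_zero_iff.2 hv))
    (linearIndependent_unique_iff (R := K) (v := fun _ : Unit => v') |>.2 hv')
  exact ⟨e ≪≫ₗ g, hg ()⟩

theorem exists_linearEquiv_ker_prod {U W : Type*} [AddCommGroup U] [Module K U]
    [AddCommGroup W] [Module K W] {q : U →ₗ[K] W} (hq : Function.Surjective q) :
    ∃ e : U ≃ₗ[K] LinearMap.ker q × W, ∀ u, (e u).2 = q u := by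
  obtain ⟨p, hp⟩ := (LinearMap.ker q).subtype.exists_leftInverse_of_injective (ker_subtype _)
  have hp' (u : LinearMap.ker q) : p u = u := LinearMap.congr_fun hp u
  exact ⟨p.equivProdOfSurjectiveOfIsCompl q (LinearMap.range_eq_of_proj hp')
    (LinearMap.range_eq_top.2 hq) (LinearMap.isCompl_of_proj hp').symm, fun u => rfl⟩

theorem exists_linearEquiv_comp_eq {U U' W : Type*} [AddCommGroup U] [Module K U]
    [AddCommGroup U'] [Module K U'] [AddCommGroup W] [Module K W]
    [FiniteDimensional K U] [FiniteDimensional K U'] (h : finrank K U = finrank K U')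
    {q : U →ₗ[K] W} {q' : U' →ₗ[K] W} (hq : Function.Surjective q)
    (hq' : Function.Surjective q') : ∃ e : U ≃ₗ[K] U', ∀ u, q' (e u) = q u := by
  obtain ⟨e, he⟩ := exists_linearEquiv_ker_prod hq
  obtain ⟨e', he'⟩ := exists_linearEquiv_ker_prod hq'
  have hker : finrank K (LinearMap.ker q) = finrank K (LinearMap.ker q') := by
    have := q.finrank_range_add_finrank_ker
    have := q'.finrank_range_add_finrank_ker
    rw [LinearMap.range_eq_top.2 ‹_›, finrank_top] at *
    omega
  let k := LinearEquiv.ofFinrankEq _ _ hker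
  refine ⟨e ≪≫ₗ k.prodCongr (.refl K W) ≪≫ₗ e'.symm, fun u => ?_⟩
  rw [← he', ← he]
  simp

theorem map_eq_of_forall_apply_eq {B B' : Submodule K V} {g : V →ₗ[K] V} (f : B ≃ₗ[K] B')
    (h : ∀ b : B, g b = f b) : B.map g = B' := by
  have hgf : g ∘ₗ B.subtype = B'.subtype ∘ₗ f := LinearMap.ext h
  rw [← B.range_subtype, ← LinearMap.range_comp, hgf, f.range_comp, range_subtype]

theorem exists_linearEquiv_map_eq_of_isCompl [FiniteDimensional K V] {a a' : V}
    {B B' C C' : Submodule K V} (hB : finrank K B = finrank K B')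
    (h : IsCompl B C) (h' : IsCompl B' C') (haB : a ∉ B) (haB' : a' ∉ B')
    (haC : a ∉ C) (haC' : a' ∉ C') :
    ∃ g : V ≃ₗ[K] V, g a = a' ∧ B.map g.toLinearMap = B' ∧ C.map g.toLinearMap = C' := by
  have hC : finrank K C = finrank K C' := by
    have := finrank_add_eq_of_isCompl h
    have := finrank_add_eq_of_isCompl h'
    omega
  let e := prodEquivOfIsCompl B C h
  let e' := prodEquivOfIsCompl B' C' h'
  obtain ⟨f, hf⟩ := exists_linearEquiv_apply_eq_of_ne_zero hB
    (mt (prodEquivOfIsCompl_symm_apply_fst_eq_zero _ _ h).1 haC)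
    (mt (prodEquivOfIsCompl_symm_apply_fst_eq_zero _ _ h').1 haC')
  obtain ⟨k, hk⟩ := exists_linearEquiv_apply_eq_of_ne_zero hC
    (mt (prodEquivOfIsCompl_symm_apply_snd_eq_zero _ _ h).1 haB)
    (mt (prodEquivOfIsCompl_symm_apply_snd_eq_zero _ _ h').1 haB')
  refine ⟨e.symm ≪≫ₗ f.prodCongr k ≪≫ₗ e', e'.eq_symm_apply.1 (Prod.ext hf hk),
    map_eq_of_forall_apply_eq f fun b => ?_, map_eq_of_forall_apply_eq k fun c => ?_⟩
  · simp [e, e']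
  · simp [e, e']

theorem exists_linearEquiv_prod_of_sup_eq_top [FiniteDimensional K V] {a : V}
    {B C : Submodule K V} (hdim : 1 + finrank K B + finrank K C = finrank K V)
    (h : span K {a} ⊔ B ⊔ C = ⊤) :
    ∃ e : ((K × B) × C) ≃ₗ[K] V, ∀ x b c, e ((x, b), c) = x • a + b + c := by
  let φ := ((LinearMap.toSpanSingleton K V a).coprod B.subtype).coprod C.subtype
  have hφ : Function.Surjective φ := by
    rw [← LinearMap.range_eq_top, LinearMap.range_coprod, LinearMap.range_coprod,
      LinearMap.range_toSpanSingleton, range_subtype, range_subtype, h]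
  exact ⟨.ofBijective φ ⟨(LinearMap.injective_iff_surjective_of_finrank_eq_finrank
    (by simp [hdim])).2 hφ, hφ⟩, fun x b c => rfl⟩

theorem exists_linearEquiv_extending_of_sup_eq_top [FiniteDimensional K V] {a a' : V}
    {B B' C C' : Submodule K V} (hdim : 1 + finrank K B + finrank K C = finrank K V)
    (h : span K {a} ⊔ B ⊔ C = ⊤) (h' : span K {a'} ⊔ B' ⊔ C' = ⊤)
    (f : B ≃ₗ[K] B') (k : C ≃ₗ[K] C') :
    ∃ g : V ≃ₗ[K] V, g a = a' ∧ (∀ b : B, g b = f b) ∧ ∀ c : C, g c = k c := by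
  obtain ⟨e, he⟩ := exists_linearEquiv_prod_of_sup_eq_top hdim h
  obtain ⟨e', he'⟩ := exists_linearEquiv_prod_of_sup_eq_top
    (f.finrank_eq ▸ k.finrank_eq ▸ hdim) h'
  let g := e.symm ≪≫ₗ ((LinearEquiv.refl K K).prodCongr f).prodCongr k ≪≫ₗ e'
  have hg (x : K) (b : B) (c : C) : g (x • a + b + c) = x • a' + f b + k c := by
    simp [g, ← he, he']
  exact ⟨g, by simpa using hg 1 0 0, fun b => by simpa using hg 0 b 0,
    fun c => by simpa using hg 0 0 c⟩

theorem exists_linearEquiv_mkQ_eq_of_codisjoint [FiniteDimensional K V]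
    {D D' E E' : Submodule K V} (i : (V ⧸ D') ≃ₗ[K] V ⧸ D) (hE : finrank K E = finrank K E')
    (h : Codisjoint E D) (h' : Codisjoint E' D') :
    ∃ f : E ≃ₗ[K] E', ∀ x : E, i (D'.mkQ (f x)) = D.mkQ x := by
  have hsurj {E D : Submodule K V} (hE : Codisjoint E D) :
      Function.Surjective (D.mkQ ∘ₗ E.subtype) := by
    rw [← LinearMap.range_eq_top, LinearMap.range_comp, range_subtype, map_mkQ_eq_top, sup_comm]
    exact hE.eq_top
  exact exists_linearEquiv_comp_eq (q' := i.toLinearMap ∘ₗ D'.mkQ ∘ₗ E'.subtype) hE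
    (hsurj h) (i.surjective.comp (hsurj h'))

theorem exists_linearEquiv_map_eq_of_codisjoint [FiniteDimensional K V] {a a' : V}
    {B B' C C' D D' : Submodule K V} (hB : finrank K B = finrank K B')
    (hC : finrank K C = finrank K C') (hD : finrank K D = finrank K D')
    (hdim : 1 + finrank K B + finrank K C = finrank K V)
    (h : span K {a} ⊔ B ⊔ C = ⊤) (h' : span K {a'} ⊔ B' ⊔ C' = ⊤)
    (hBD : Codisjoint B D) (hBD' : Codisjoint B' D') (hCD : Codisjoint C D)
    (hCD' : Codisjoint C' D') (ha : a ∉ D) (ha' : a' ∉ D') :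
    ∃ g : V ≃ₗ[K] V, g a = a' ∧ B.map g.toLinearMap = B' ∧ C.map g.toLinearMap = C' ∧
      D.map g.toLinearMap = D' := by
  have hquot : finrank K (V ⧸ D') = finrank K (V ⧸ D) := by
    have := D.finrank_quotient_add_finrank
    have := D'.finrank_quotient_add_finrank
    omega
  obtain ⟨i, hi⟩ := exists_linearEquiv_apply_eq_of_ne_zero hquot
    (mt (Quotient.mk_eq_zero D').1 ha') (mt (Quotient.mk_eq_zero D).1 ha)
  obtain ⟨f, hf⟩ := exists_linearEquiv_mkQ_eq_of_codisjoint i hB hBD hBD'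
  obtain ⟨k, hk⟩ := exists_linearEquiv_mkQ_eq_of_codisjoint i hC hCD hCD'
  obtain ⟨g, hga, hgB, hgC⟩ := exists_linearEquiv_extending_of_sup_eq_top hdim h h' f k
  refine ⟨g, hga, map_eq_of_forall_apply_eq f hgB, map_eq_of_forall_apply_eq k hgC, ?_⟩
  -- `g` was chosen compatible with `i` on `a`, `B` and `C`, hence everywhere.
  have hcomp : i.toLinearMap ∘ₗ D'.mkQ ∘ₗ g.toLinearMap = D.mkQ := by
    rw [← LinearMap.eqLocus_eq_top, eq_top_iff, ← h]
    refine sup_le (sup_le ?_ fun b hb => ?_) fun c hc => ?_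
    · rw [span_singleton_le_iff_mem]
      simpa [hga] using hi
    · simpa [hgB ⟨b, hb⟩] using hf ⟨b, hb⟩
    · simpa [hgC ⟨c, hc⟩] using hk ⟨c, hc⟩
  have hcomap : D = D'.comap g.toLinearMap := by
    rw [← D.ker_mkQ, ← hcomp, LinearEquiv.ker_comp, LinearMap.ker_comp, ker_mkQ]
  rw [hcomap, map_comap_eq_of_surjective g.surjective]

end LinearAlgebra

section Genericity

open MvPolynomial

variable {K σ : Type*} [Field K]

theorem exists_mul_eq_one_of_linearIndependent {ι κ : Type*} [Finite ι] [DecidableEq ι]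
    [Fintype κ] {A : Matrix ι κ K} (hA : LinearIndependent K A) :
    ∃ B : Matrix κ ι K, A * B = 1 := by
  classical
  have := Fintype.ofFinite ι
  obtain ⟨g, hg⟩ := A.toLinearMapRight'.exists_leftInverse_of_injective
    (LinearMap.ker_eq_bot.2 (Matrix.vecMul_injective_iff.2 hA))
  refine ⟨LinearMap.toMatrixRight' g, Matrix.toLinearMapRight'.injective ?_⟩
  simpa [Matrix.toLinearMapRight'_mul] using hg

theorem exists_mvPolynomial_linearIndependent {ι κ : Type*} [Finite ι] [Finite κ]
    {idx : ι → κ → σ} {a₀ : σ → K} (h₀ : LinearIndependent K fun p r => a₀ (idx p r)) :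
    ∃ F : MvPolynomial σ K, eval a₀ F ≠ 0 ∧
      ∀ a, eval a F ≠ 0 → LinearIndependent K fun p r => a (idx p r) := by
  classical
  have := Fintype.ofFinite ι
  have := Fintype.ofFinite κ
  obtain ⟨B, hB⟩ := exists_mul_eq_one_of_linearIndependent (A := .of fun p r => a₀ (idx p r)) h₀
  let Y : Matrix ι κ (MvPolynomial σ K) := .of fun p r => X (idx p r)
  let R : Matrix κ ι (MvPolynomial σ K) := B.map C
  have hY (a : σ → K) : Y.map (eval a) = .of fun p r => a (idx p r) := by ext; simp [Y]
  have hR (a : σ → K) : R.map (eval a) = B := by ext; simp [R]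
  have hF (a : σ → K) : eval a (Y * R).det = (Matrix.of (fun p r => a (idx p r)) * B).det := by
    rw [RingHom.map_det, RingHom.mapMatrix_apply, Matrix.map_mul, hY, hR]
  refine ⟨(Y * R).det, by simp [hF, hB], fun a ha => ?_⟩
  rw [hF] at ha
  exact .of_comp B.vecMulLinear (Matrix.linearIndependent_rows_of_det_ne_zero ha)

theorem exists_mvPolynomial_linearlyGeneral {κ ι : Type*} [Finite κ] [Finite ι]
    {idx : κ → ι → σ} {a₀ : σ → K} (h₀ : LinearlyGeneral K fun p r => a₀ (idx p r)) :
    ∃ F : MvPolynomial σ K, F ≠ 0 ∧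
      ∀ a, eval a F ≠ 0 → LinearlyGeneral K fun p r => a (idx p r) := by
  classical
  have := Fintype.ofFinite κ
  have (s : {s : Finset κ // #s ≤ finrank K (ι → K)}) :=
    exists_mvPolynomial_linearIndependent (h₀ s s.2)
  choose F hF₀ hF using this
  refine ⟨∏ s, F s, prod_ne_zero_iff.2 fun s _ hs => hF₀ s (by simp [hs]), fun a ha s hs => ?_⟩
  rw [map_prod, prod_ne_zero_iff] at ha
  exact hF ⟨s, hs⟩ a (ha _ (mem_univ _))

end Genericity

section RationalNormalCurve

open Projectivization

variable {n : ℕ}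

theorem rep_mk_mem_iff {K V : Type*} [Field K] [AddCommGroup V] [Module K V] {v : V} (hv : v ≠ 0)
    (Λ : Submodule K V) : (mk K v hv).rep ∈ Λ ↔ v ∈ Λ := by
  obtain ⟨a, ha⟩ := exists_smul_eq_mk_rep K v hv
  rw [← ha]
  exact Λ.smul_mem_iff_of_isUnit a.isUnit

instance infinite_PP_one : Infinite (PP 1) := by
  refine .of_injective (fun t : ℂ => mk ℂ ![t, 1] (by simp)) fun s t hst => ?_
  obtain ⟨c, hc⟩ := (mk_eq_mk_iff' ..).1 hst
  have hc₁ : c = 1 := by simpa using congr_fun hc 1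
  simpa [hc₁] using (congr_fun hc 0).symm

theorem rep_cross_ne_zero {K : Type*} [Field K] {P Q : Projectivization K (Fin 2 → K)}
    (h : P ≠ Q) : P.rep 0 * Q.rep 1 - Q.rep 0 * P.rep 1 ≠ 0 := by
  have hli : LinearIndependent K (Matrix.of ![P.rep, Q.rep]).row :=
    linearIndependent_pair_iff_ne.2 h
  rw [Matrix.linearIndependent_rows_iff_isUnit, Matrix.isUnit_iff_isUnit_det, isUnit_iff_ne_zero,
    Matrix.det_fin_two] at hli
  simpa [mul_comm] using hli

theorem veron_smul (n : ℕ) (c : ℂ) (v : Fin 2 → ℂ) : veron n (c • v) = c ^ n • veron n v := by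
  ext k
  simp only [veron, Pi.smul_apply, smul_eq_mul, mul_pow]
  rw [← pow_mul_pow_sub c k.is_le]
  ring

theorem linearIndependent_veron_rep {Q : Fin (n + 1) → PP 1} (hQ : Q.Injective) :
    LinearIndependent ℂ fun i => veron n (Q i).rep := by
  have hV : (fun i => veron n (Q i).rep) =
      Matrix.projVandermonde (fun i => (Q i).rep 0) fun i => (Q i).rep 1 := by
    ext i k
    simp [veron, Matrix.projVandermonde_apply, Fin.val_rev]
  rw [hV]
  refine Matrix.linearIndependent_rows_of_det_ne_zero ?_
  rw [Matrix.det_projVandermonde]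
  exact prod_ne_zero_iff.2 fun i _ => prod_ne_zero_iff.2 fun j hj =>
    rep_cross_ne_zero (hQ.ne (mem_Ioi.1 hj).ne')

theorem linearlyGeneral_veron_rep (n : ℕ) : LinearlyGeneral ℂ fun Q : PP 1 => veron n Q.rep := by
  intro s hs
  rw [finrank_fin_fun] at hs
  obtain ⟨t, hst, ht⟩ := Infinite.exists_superset_card_eq s (n + 1) hs
  let e := (t.equivFinOfCardEq ht).symm
  have hli : LinearIndependent ℂ fun Q : t => veron n Q.1.rep :=
    (linearIndependent_equiv e).1 <|
      linearIndependent_veron_rep (Subtype.val_injective.comp e.injective)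
  exact LinearIndepOn.mono hli (mod_cast hst)

theorem veron_ne_zero (n : ℕ) (Q : PP 1) : veron n Q.rep ≠ 0 := by
  have := linearlyGeneral_veron_rep n {Q} (by simp)
  simpa using this

/-- The rational normal curve of degree `n` with coefficient matrix `M`, as a map on `ℙ¹`. -/
def rationalNormalMap (M : Matrix (Fin (n + 1)) (Fin (n + 1)) ℂ) (hM : IsUnit M.det) (Q : PP 1) :
    PP n :=
  mk ℂ (M.mulVec (veron n Q.rep)) fun h => veron_ne_zero n Q <|
    Matrix.mulVec_injective_of_isUnit (M.isUnit_iff_isUnit_det.2 hM) (h.trans (M.mulVec_zero).symm)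

theorem rationalNormalMap_injective (hn : 1 ≤ n) {M : Matrix (Fin (n + 1)) (Fin (n + 1)) ℂ}
    (hM : IsUnit M.det) : (rationalNormalMap M hM).Injective := by
  intro P Q hPQ
  obtain ⟨c, hc⟩ := (mk_eq_mk_iff' ..).1 hPQ
  have hc' : c • veron n Q.rep = veron n P.rep :=
    Matrix.mulVec_injective_of_isUnit (M.isUnit_iff_isUnit_det.2 hM) (by rw [M.mulVec_smul, hc])
  have hmem : veron n P.rep ∈ span ℂ ((fun Q : PP 1 => veron n Q.rep) '' ({Q} : Finset (PP 1))) :=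
    by simpa using mem_span_singleton.2 ⟨c, hc'⟩
  simpa using ((linearlyGeneral_veron_rep n).mem_span_image_iff (by simpa)).1 hmem

theorem isRNC_iff_exists_range {C : Set (PP n)} :
    IsRNC n C ↔ ∃ M, ∃ hM : IsUnit M.det, C = Set.range (rationalNormalMap M hM) := by
  refine exists_congr fun M => (exists_prop (b := C = _)).symm.trans (exists_congr fun hM => ?_)
  suffices h : {P : PP n | ∃ v : Fin 2 → ℂ, v ≠ 0 ∧ ∃ c : ℂ, c ≠ 0 ∧
      P.rep = c • M.mulVec (veron n v)} = Set.range (rationalNormalMap M hM) by rw [h]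
  ext P
  constructor
  · rintro ⟨v, hv, c, -, hP⟩
    obtain ⟨a, ha⟩ := exists_smul_eq_mk_rep ℂ v hv
    refine ⟨mk ℂ v hv, ?_⟩
    rw [← P.mk_rep, rationalNormalMap, eq_comm, mk_eq_mk_iff']
    refine ⟨c * (a⁻¹ : ℂˣ) ^ n, ?_⟩
    rw [← ha, Units.smul_def, veron_smul, M.mulVec_smul, smul_smul, hP, mul_assoc, ← mul_pow]
    simp
  · rintro ⟨Q, rfl⟩
    obtain ⟨a, ha⟩ := exists_smul_eq_mk_rep ℂ (M.mulVec (veron n Q.rep)) _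
    exact ⟨Q.rep, Q.rep_nonzero, a, a.ne_zero, ha.symm⟩

theorem ncard_range_rationalNormalMap_inter (hn : 1 ≤ n) {M : Matrix (Fin (n + 1)) (Fin (n + 1)) ℂ}
    (hM : IsUnit M.det) {m : ℕ} (A : Matrix (Fin (n + 1)) (Fin m) ℂ) :
    (Set.range (rationalNormalMap M hM) ∩ projSet A).ncard =
      {Q : PP 1 | M.mulVec (veron n Q.rep) ∈ span ℂ (Set.range A.col)}.ncard := by
  rw [← Set.image_preimage_eq_range_inter, Set.ncard_image_of_injective _
    (rationalNormalMap_injective hn hM)]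
  congr 1
  ext Q
  exact rep_mk_mem_iff _ (span ℂ (Set.range A.col))

end RationalNormalCurve

section Configurations

variable {n : ℕ} {L : Fin (n - 1) → ℕ}

/-- The index type of the components of a configuration of weight `L`. -/
abbrev ComponentIndex (L : Fin (n - 1) → ℕ) := (i : Fin (n - 1)) × Fin (L i)

/-- The index type of all columns of the matrices in a configuration of weight `L`. -/
abbrev ColumnIndex (L : Fin (n - 1) → ℕ) := (p : ComponentIndex L) × Fin (p.1.1 + 1)

/-- The index type of the matrix entries of a configuration of weight `L`, as in `GenHolds`. -/
abbrev EntryIndex (n : ℕ) (L : Fin (n - 1) → ℕ) :=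
  (i : Fin (n - 1)) × (Fin (L i) × Fin (n + 1) × Fin (i.1 + 1))

/-- The linear subspace of `ℂ^{n+1}` whose projectivization is the component `p` of `A`. -/
def component (A : Config n L) (p : ComponentIndex L) : Submodule ℂ (Fin (n + 1) → ℂ) :=
  span ℂ (Set.range (A p.1 p.2).col)

/-- The family of all columns of the matrices in `A`. -/
def columns (A : Config n L) (x : ColumnIndex L) : Fin (n + 1) → ℂ :=
  (A x.1.1 x.1.2).col x.2

/-- The configuration spanned by the points `veron n (Q x)` of the standard rational normal
curve. -/
def veroneseConfig (Q : ColumnIndex L → PP 1) : Config n L :=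
  fun i j r k => veron n (Q ⟨⟨i, j⟩, k⟩).rep r

/-- The indices of the columns spanning the component `p`. -/
def columnBlock (p : ComponentIndex L) : Finset (ColumnIndex L) :=
  univ.map (.sigmaMk p)

theorem card_columnBlock (p : ComponentIndex L) : #(columnBlock p) = p.1.1 + 1 := by
  simp [columnBlock]

theorem disjoint_columnBlock {p q : ComponentIndex L} (h : p ≠ q) :
    Disjoint (columnBlock p) (columnBlock q) := by
  simp only [columnBlock, disjoint_left, mem_map, mem_univ, true_and]
  rintro _ ⟨k, rfl⟩ ⟨l, hl⟩
  exact h (congrArg Sigma.fst hl).symm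

theorem component_eq_span_image (A : Config n L) (p : ComponentIndex L) :
    component A p = span ℂ (columns A '' columnBlock p) := by
  rw [component, columnBlock, coe_map, coe_univ, Set.image_univ, ← Set.range_comp]
  rfl

theorem component_eq_span_singleton (A : Config n L) {p : ComponentIndex L} (hp : p.1.1 = 0) :
    component A p = span ℂ {columns A ⟨p, 0⟩} := by
  have hk (k : Fin (p.1.1 + 1)) : k = 0 := Fin.ext (by simp; omega)
  rw [component, Set.range_eq_singleton_iff.2 fun k => by rw [hk k]]
  rfl

theorem nonempty_embedding_of_infinite (α β : Type*) [Countable α] [Infinite β] :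
    Nonempty (α ↪ β) :=
  let ⟨f, hf⟩ := exists_injective_nat α
  ⟨.trans ⟨f, hf⟩ (Infinite.natEmbedding β)⟩

theorem linearlyGeneral_columns_veroneseConfig {Q : ColumnIndex L → PP 1} (hQ : Q.Injective) :
    LinearlyGeneral ℂ (columns (veroneseConfig Q)) :=
  (linearlyGeneral_veron_rep n).comp hQ

theorem genHolds_of_forall_linearlyGeneral {P : Config n L → Prop}
    (h : ∀ A, LinearlyGeneral ℂ (columns A) → P A) : GenHolds n L P := by
  obtain ⟨Q⟩ := nonempty_embedding_of_infinite (ColumnIndex L) (PP 1)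
  let idx (x : ColumnIndex L) (r : Fin (n + 1)) : EntryIndex n L := ⟨x.1.1, x.1.2, r, x.2⟩
  obtain ⟨F, hF, hFA⟩ := exists_mvPolynomial_linearlyGeneral (idx := idx)
    (a₀ := fun p => veroneseConfig Q p.1 p.2.1 p.2.2.1 p.2.2.2)
    (linearlyGeneral_columns_veroneseConfig Q.injective)
  exact ⟨F, hF, fun A _ hA => h A (hFA (fun p => A p.1 p.2.1 p.2.2.1 p.2.2.2) hA)⟩

section LinearlyGeneral

variable {A : Config n L} (hA : LinearlyGeneral ℂ (columns A))
include hA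

theorem finrank_component (p : ComponentIndex L) : finrank ℂ (component A p) = p.1.1 + 1 := by
  rw [component_eq_span_image, hA.finrank_span_image] <;> rw [card_columnBlock]
  rw [finrank_fin_fun]
  omega

theorem columns_notMem_component {p q : ComponentIndex L} (h : p ≠ q) (k : Fin (p.1.1 + 1)) :
    columns A ⟨p, k⟩ ∉ component A q := by
  rw [component_eq_span_image, hA.mem_span_image_iff (by simp [card_columnBlock]; omega)]
  exact disjoint_left.1 (disjoint_columnBlock h) (by simp [columnBlock])

theorem disjoint_component {p q : ComponentIndex L} (h : p ≠ q)
    (hpq : p.1.1 + 1 + (q.1.1 + 1) ≤ n + 1) : Disjoint (component A p) (component A q) := by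
  rw [component_eq_span_image, component_eq_span_image]
  refine hA.disjoint_span_image (disjoint_columnBlock h) ?_
  simpa only [card_columnBlock, finrank_fin_fun]

theorem iSup_component_eq_top (s : Finset (ComponentIndex L))
    (hs : n + 1 ≤ ∑ p ∈ s, (p.1.1 + 1)) : ⨆ p ∈ s, component A p = ⊤ := by
  have hcard : #(s.biUnion columnBlock) = ∑ p ∈ s, (p.1.1 + 1) := by
    rw [card_biUnion fun p _ q _ h => disjoint_columnBlock h]
    simp only [card_columnBlock]
  simp only [component_eq_span_image, ← span_iUnion, ← Set.image_iUnion]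
  rw [← hA.span_image_eq_top (s := s.biUnion columnBlock) (by rwa [hcard, finrank_fin_fun]),
    coe_biUnion]
  rfl

theorem codisjoint_component {p q : ComponentIndex L} (h : p ≠ q)
    (hpq : n + 1 ≤ p.1.1 + 1 + (q.1.1 + 1)) : Codisjoint (component A p) (component A q) := by
  rw [codisjoint_iff, ← iSup_component_eq_top hA {p, q} (by rwa [sum_pair h]), Finset.iSup_insert,
    Finset.iSup_singleton]

end LinearlyGeneral

theorem feasible_of_forall_exists_linearEquiv
    (h : ∀ A B : Config n L, LinearlyGeneral ℂ (columns A) → LinearlyGeneral ℂ (columns B) →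
      ∃ g : (Fin (n + 1) → ℂ) ≃ₗ[ℂ] (Fin (n + 1) → ℂ),
        ∀ p, (component A p).map g.toLinearMap = component B p) : Feasible n L := by
  obtain ⟨Q⟩ := nonempty_embedding_of_infinite (ColumnIndex L) (PP 1)
  have hQ := linearlyGeneral_columns_veroneseConfig Q.injective
  refine genHolds_of_forall_linearlyGeneral fun A hA => ?_
  obtain ⟨g, hg⟩ := h _ A hQ hA
  have hM : IsUnit (LinearMap.toMatrix' g.toLinearMap).det := by
    rw [LinearMap.det_toMatrix']
    exact g.isUnit_det'
  refine ⟨_, isRNC_iff_exists_range.2 ⟨_, hM, rfl⟩, fun i j => ?_⟩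
  have hi := i.2
  have hpts : {P : PP 1 | (LinearMap.toMatrix' g.toLinearMap).mulVec (veron n P.rep) ∈
      component A ⟨i, j⟩} = (columnBlock ⟨i, j⟩).map Q := by
    ext P
    have hcard : #((columnBlock ⟨i, j⟩).map Q) < finrank ℂ (Fin (n + 1) → ℂ) := by
      rw [card_map, card_columnBlock, finrank_fin_fun]
      omega
    rw [mem_coe, ← (linearlyGeneral_veron_rep n).mem_span_image_iff hcard, coe_map,
      ← Set.image_comp]
    change _ ↔ veron n P.rep ∈ span ℂ (columns (veroneseConfig Q) '' columnBlock ⟨i, j⟩)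
    rw [← component_eq_span_image, ← hg, Set.mem_ofPred_eq, LinearMap.toMatrix'_mulVec]
    exact g.injective.mem_set_image
  refine (ncard_range_rationalNormalMap_inter (by omega) hM _).trans
    ((congrArg Set.ncard hpts).trans ?_)
  rw [Set.ncard_coe_finset, card_map, card_columnBlock]

theorem feasible_of_card_columnIndex_le (h : Fintype.card (ColumnIndex L) ≤ n + 1) :
    Feasible n L := by
  have hdim : Fintype.card (ColumnIndex L) ≤ finrank ℂ (Fin (n + 1) → ℂ) := by
    rwa [finrank_fin_fun]
  refine feasible_of_forall_exists_linearEquiv fun A B hA hB => ?_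
  obtain ⟨g, hg⟩ := exists_linearEquiv_apply_eq (hA.linearIndependent hdim)
    (hB.linearIndependent hdim)
  refine ⟨g, fun p => ?_⟩
  rw [component_eq_span_image, component_eq_span_image, map_span, ← Set.image_comp]
  exact congrArg _ (Set.image_congr fun x _ => hg x)

theorem feasible_three : Feasible 3 fun _ => 1 :=
  feasible_of_card_columnIndex_le (by decide)

theorem feasible_four : Feasible 4 fun _ => 1 := by
  refine feasible_of_forall_exists_linearEquiv fun A B hA hB => ?_
  have hcompl {A : Config 4 fun _ => 1} (hA : LinearlyGeneral ℂ (columns A)) :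
      IsCompl (component A ⟨1, 0⟩) (component A ⟨2, 0⟩) :=
    ⟨disjoint_component hA (by simp) (by simp), codisjoint_component hA (by simp) (by simp)⟩
  obtain ⟨g, h₀, h₁, h₂⟩ := exists_linearEquiv_map_eq_of_isCompl
    ((finrank_component hA ⟨1, 0⟩).trans (finrank_component hB ⟨1, 0⟩).symm)
    (hcompl hA) (hcompl hB)
    (columns_notMem_component hA (p := ⟨0, 0⟩) (by simp) 0)
    (columns_notMem_component hB (p := ⟨0, 0⟩) (by simp) 0)
    (columns_notMem_component hA (p := ⟨0, 0⟩) (by simp) 0)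
    (columns_notMem_component hB (p := ⟨0, 0⟩) (by simp) 0)
  refine ⟨g, fun ⟨i, j⟩ => ?_⟩
  obtain rfl := Subsingleton.elim j 0
  fin_cases i
  · simp [component_eq_span_singleton, map_span, h₀]
  · exact h₁
  · exact h₂

theorem feasible_five : Feasible 5 fun _ => 1 := by
  refine feasible_of_forall_exists_linearEquiv fun A B hA hB => ?_
  have hspan {A : Config 5 fun _ => 1} (hA : LinearlyGeneral ℂ (columns A)) :
      span ℂ {columns A ⟨⟨0, 0⟩, 0⟩} ⊔ component A ⟨1, 0⟩ ⊔ component A ⟨2, 0⟩ = ⊤ := by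
    rw [← component_eq_span_singleton A (p := ⟨0, 0⟩) rfl, sup_assoc,
      ← iSup_component_eq_top hA {⟨0, 0⟩, ⟨1, 0⟩, ⟨2, 0⟩} (by decide), Finset.iSup_insert,
      Finset.iSup_insert, Finset.iSup_singleton]
  have hrank (p) := (finrank_component hA p).trans (finrank_component hB p).symm
  obtain ⟨g, h₀, h₁, h₂, h₃⟩ := exists_linearEquiv_map_eq_of_codisjoint
    (hrank ⟨1, 0⟩) (hrank ⟨2, 0⟩) (hrank ⟨3, 0⟩)
    (by simp [finrank_component hA]) (hspan hA) (hspan hB)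
    (codisjoint_component hA (by simp) (by simp)) (codisjoint_component hB (by simp) (by simp))
    (codisjoint_component hA (by simp) (by simp)) (codisjoint_component hB (by simp) (by simp))
    (columns_notMem_component hA (p := ⟨0, 0⟩) (by simp) 0)
    (columns_notMem_component hB (p := ⟨0, 0⟩) (by simp) 0)
  refine ⟨g, fun ⟨i, j⟩ => ?_⟩
  obtain rfl := Subsingleton.elim j 0
  fin_cases i
  · simp [component_eq_span_singleton, map_span, h₀]
  · exact h₁
  · exact h₂
  · exact h₃

end Configurations

section ParameterCount

open MvPolynomial
open scoped Matrix

theorem exists_mvPolynomial_eval_eq_zero_of_card_lt {K σ τ : Type*} [Field K] [Fintype σ]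
    [Fintype τ] (h : Fintype.card τ < Fintype.card σ) (Φ : σ → MvPolynomial τ K) :
    ∃ F : MvPolynomial σ K, F ≠ 0 ∧ ∀ a, eval (fun s => eval a (Φ s)) F = 0 := by
  have hΦ : ¬ AlgebraicIndependent K Φ := fun hi => by
    have := hi.lift_cardinalMk_le_trdeg
    simp only [Cardinal.mk_fintype, Cardinal.lift_natCast, trdeg_of_isDomain, Nat.cast_le] at this
    exact h.not_ge this
  simp only [algebraicIndependent_iff, not_forall] at hΦ
  obtain ⟨F, hF, hF0⟩ := hΦ
  refine ⟨F, hF0, fun a => ?_⟩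
  rw [← map_zero (eval a), ← hF, aeval_def, hom_eval₂, eval, coe_eval₂Hom]
  congr 1
  ext x
  simp [algebraMap_eq]

theorem exists_eq_mul_of_forall_col_mem_span {K ι κ l : Type*} [Field K] [Fintype l]
    {A : Matrix ι κ K} {U : Matrix ι l K} (h : ∀ k, A.col k ∈ span K (Set.range U.col)) :
    ∃ B : Matrix l κ K, A = U * B := by
  simp only [← Matrix.range_mulVecLin, LinearMap.mem_range, Matrix.mulVecLin_apply] at h
  choose B hB using h
  exact ⟨.of fun j k => B k j, Matrix.ext fun i k => congr_fun (hB k).symm i⟩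

theorem span_range_eq_of_linearIndependent {K V ι : Type*} [Field K] [AddCommGroup V] [Module K V]
    [Finite ι] {u w : ι → V} (hu : LinearIndependent K u)
    (h : ∀ i, u i ∈ span K (Set.range w)) : span K (Set.range u) = span K (Set.range w) := by
  have := Fintype.ofFinite ι
  have := FiniteDimensional.span_of_finite K (Set.finite_range w)
  refine eq_of_le_of_finrank_le (span_le.2 (Set.range_subset_iff.2 h)) ?_
  rw [finrank_span_eq_card hu]
  exact finrank_range_le_card w

theorem exists_embedding_of_ncard_eq {α : Type*} {s : Set α} {m : ℕ} (h : s.ncard = m) :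
    ∃ f : Fin m ↪ α, ∀ k, f k ∈ s := by
  obtain rfl | hm := Nat.eq_zero_or_pos m
  · exact ⟨.ofIsEmpty, isEmptyElim⟩
  · have := (Set.finite_of_ncard_pos (h ▸ hm)).to_subtype
    have e := (Finite.equivFinOfCardEq ((Nat.card_coe_set_eq s).trans h)).symm
    exact ⟨e.toEmbedding.trans (.subtype _), fun k => (e k).2⟩

theorem exists_eq_smul_ite {K : Type*} [Field K] (v : Fin 2 → K) :
    ∃ (ε : Bool) (t c : K), v = c • ![t, if ε then 1 else 0] := by
  by_cases h : v 1 = 0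
  · refine ⟨false, 1, v 0, ?_⟩
    ext k
    fin_cases k <;> simp [h]
  · refine ⟨true, v 0 / v 1, v 1, ?_⟩
    ext k
    fin_cases k <;> simp [h, mul_div_cancel₀]

theorem exists_eq_mul_rectVandermonde_mul {n m : ℕ} (hm : m ≤ n + 1)
    {M : Matrix (Fin (n + 1)) (Fin (n + 1)) ℂ} (hM : IsUnit M.det)
    {A : Matrix (Fin (n + 1)) (Fin m) ℂ}
    (hA : {Q : PP 1 | M.mulVec (veron n Q.rep) ∈ span ℂ (Set.range A.col)}.ncard = m) :
    ∃ (ε : Fin m → Bool) (t : Fin m → ℂ) (B : Matrix (Fin m) (Fin m) ℂ),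
      A = M * (Matrix.rectVandermonde t (fun k => if ε k then 1 else 0) (n + 1))ᵀ * B := by
  obtain ⟨Q, hQ⟩ := exists_embedding_of_ncard_eq hA
  choose ε t c hc using fun k => exists_eq_smul_ite (Q k).rep
  have hli : LinearIndependent ℂ fun k => M.mulVec (veron n (Q k).rep) := by
    refine LinearIndependent.map' ?_ M.mulVecLin (LinearMap.ker_eq_bot.2 <|
      Matrix.mulVec_injective_of_isUnit (M.isUnit_iff_isUnit_det.2 hM))
    exact ((linearlyGeneral_veron_rep n).comp Q.injective).linearIndependent (by simpa)
  have hspan := span_range_eq_of_linearIndependent hli hQ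
  refine ⟨ε, t, exists_eq_mul_of_forall_col_mem_span fun k => ?_⟩
  have hk : A.col k ∈ span ℂ (Set.range A.col) := subset_span ⟨k, rfl⟩
  rw [← hspan] at hk
  refine span_le.2 (Set.range_subset_iff.2 fun l => ?_) hk
  rw [hc, veron_smul, M.mulVec_smul]
  refine smul_mem _ _ (subset_span ⟨l, congrArg M.mulVec (funext fun r => ?_)⟩)
  simp [veron, Matrix.rectVandermonde_apply, Fin.val_rev]

variable {n : ℕ} {L : Fin (n - 1) → ℕ}

/-- The entries of the configuration whose `p`-th matrix is `M V B_p`, where `M` is the coefficient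
matrix of a rational normal curve and the columns of `V` are the images `veron n ![t x, ε x]` of the
points `[t x : ε x]` of `ℙ¹`, so that the `p`-th component is spanned by points of the curve.
The ring is arbitrary so that the entries can also be polynomials in the parameters. -/
def secantConfig {R : Type*} [CommRing R] (M : Matrix (Fin (n + 1)) (Fin (n + 1)) R)
    (t ε : ColumnIndex L → R)
    (B : (p : ComponentIndex L) → Matrix (Fin (p.1.1 + 1)) (Fin (p.1.1 + 1)) R)
    (e : EntryIndex n L) : R :=
  let p : ComponentIndex L := ⟨e.1, e.2.1⟩
  (M * (Matrix.rectVandermonde (fun k => t ⟨p, k⟩) (fun k => ε ⟨p, k⟩) (n + 1))ᵀ * B p)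
    e.2.2.1 e.2.2.2

theorem map_secantConfig {R S : Type*} [CommRing R] [CommRing S] (f : R →+* S)
    (M : Matrix (Fin (n + 1)) (Fin (n + 1)) R) (t ε : ColumnIndex L → R)
    (B : (p : ComponentIndex L) → Matrix (Fin (p.1.1 + 1)) (Fin (p.1.1 + 1)) R)
    (e : EntryIndex n L) :
    f (secantConfig M t ε B e) =
      secantConfig (M.map f) (f ∘ t) (f ∘ ε) (fun p => (B p).map f) e := by
  simp [secantConfig, Matrix.mul_apply, Matrix.rectVandermonde_apply]

/-- The index type of the parameters of `secantConfig`: the entries of `M`, the affine coordinates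
`t` and the entries of the matrices `B_p`. -/
abbrev SecantParameter (L : Fin (n - 1) → ℕ) :=
  (Fin (n + 1) × Fin (n + 1)) ⊕ ColumnIndex L ⊕ ((x : ColumnIndex L) × Fin (x.1.1 + 1))

theorem card_secantParameter_lt_card_entryIndex
    (h : (n + 1) ^ 2 < ∑ i, L i * ((i + 1) * (n - 1 - i))) :
    Fintype.card (SecantParameter L) < Fintype.card (EntryIndex n L) := by
  have hsum : ∑ i, L i * ((n + 1) * (i + 1)) = ∑ i, L i * ((i + 1) * (n - 1 - i)) +
      (∑ i, L i * (i + 1) + ∑ i, L i * ((i + 1) * (i + 1))) := by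
    simp only [← sum_add_distrib]
    refine sum_congr rfl fun i _ => ?_
    rw [show n + 1 = (n - 1 - i) + (i + 2) by omega]
    ring
  have hparam : Fintype.card (SecantParameter L) =
      (n + 1) ^ 2 + (∑ i, L i * (i + 1) + ∑ i, L i * ((i + 1) * (i + 1))) := by
    simp [Fintype.sum_sigma, sq]
  have hentry : Fintype.card (EntryIndex n L) = ∑ i, L i * ((n + 1) * (i + 1)) := by simp
  omega

theorem exists_mvPolynomial_eval_secantConfig_eq_zero
    (h : Fintype.card (SecantParameter L) < Fintype.card (EntryIndex n L)) (ε : ColumnIndex L → ℂ) :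
    ∃ F : MvPolynomial (EntryIndex n L) ℂ, F ≠ 0 ∧
      ∀ M t B, eval (secantConfig M t ε B) F = 0 := by
  obtain ⟨F, hF, hF0⟩ := exists_mvPolynomial_eval_eq_zero_of_card_lt h <|
    secantConfig (.of fun r c => X (.inl (r, c))) (fun x => X (.inr (.inl x))) (C ∘ ε)
      fun p => .of fun k l => X (.inr (.inr ⟨⟨p, k⟩, l⟩))
  refine ⟨F, hF, fun M t B => ?_⟩
  let a : SecantParameter L → ℂ :=
    Sum.elim (fun q => M q.1 q.2) (Sum.elim t fun q => B q.1.1 q.1.2 q.2)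
  refine (congrArg (eval · F) (funext fun e => ?_)).trans (hF0 a)
  rw [map_secantConfig]
  congr <;> ext <;> simp [a]

theorem nonFeasible_of_lt (h : (n + 1) ^ 2 < ∑ i, L i * ((i + 1) * (n - 1 - i))) :
    NonFeasible n L := by
  -- One relation for every choice of affine charts of `ℙ¹` containing the points of intersection.
  choose F hF hF0 using fun ε : ColumnIndex L → Bool =>
    exists_mvPolynomial_eval_secantConfig_eq_zero (card_secantParameter_lt_card_entryIndex h)
      fun x => if ε x then 1 else 0
  refine ⟨∏ ε, F ε, prod_ne_zero_iff.2 fun ε _ => hF ε, ?_⟩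
  rintro A - hA ⟨C, hC, hAC⟩
  obtain ⟨M, hM, rfl⟩ := isRNC_iff_exists_range.1 hC
  have hfac (p : ComponentIndex L) := exists_eq_mul_rectVandermonde_mul (by have := p.1.2; omega) hM
    ((ncard_range_rationalNormalMap_inter (by have := p.1.2; omega) hM _).symm.trans (hAC p.1 p.2))
  choose ε t B hB using hfac
  rw [map_prod, prod_ne_zero_iff] at hA
  refine hA (fun x => ε x.1 x.2) (mem_univ _) ?_
  convert hF0 (fun x => ε x.1 x.2) M (fun x => t x.1 x.2) B with e
  exact congr_fun₂ (hB ⟨e.1, e.2.1⟩) e.2.2.1 e.2.2.2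

theorem six_mul_sum_range_mul_sub (m : ℕ) :
    6 * ∑ i ∈ range m, (i + 1) * (m - i) = m * (m + 1) * (m + 2) := by
  induction m with
  | zero => simp
  | succ m ih =>
    have h : ∑ i ∈ range (m + 1), (i + 1) * (m + 1 - i) =
        ∑ i ∈ range (m + 1), (i + 1) * (m - i) + ∑ i ∈ range (m + 1 + 1), i := by
      rw [sum_range_succ' _ (m + 1), add_zero, ← sum_add_distrib]
      refine sum_congr rfl fun i hi => ?_
      rw [Nat.sub_add_comm (mem_range_succ_iff.1 hi)]
      ring
    rw [h, sum_range_succ, Nat.sub_self, mul_zero, add_zero, mul_add, ih,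
      show 6 * ∑ i ∈ range (m + 1 + 1), i = 3 * ((∑ i ∈ range (m + 1 + 1), i) * 2) by ring,
      sum_range_id_mul_two, Nat.add_sub_cancel]
    ring

theorem sq_lt_sum_range_mul_sub {n : ℕ} (hn : 8 ≤ n) :
    (n + 1) ^ 2 < ∑ i ∈ range (n - 1), (i + 1) * (n - 1 - i) := by
  obtain ⟨m, rfl⟩ := Nat.exists_eq_add_of_le' (show 1 ≤ n by omega)
  have hsum := six_mul_sum_range_mul_sub m
  rw [Nat.add_sub_cancel]
  nlinarith

end ParameterCount

/-- The weight vector `(1,…,1)` in `ℙⁿ` (one generic subspace of each dimension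
`0 ≤ i ≤ n-2`) is feasible for `3 ≤ n ≤ 5` and non-feasible for `n ≥ 8`. -/
theorem one_space_in_each_dimension (n : ℕ) (hn : 3 ≤ n) :
    (n ≤ 5 → Feasible n fun _ => 1) ∧ (8 ≤ n → NonFeasible n fun _ => 1) := by
  refine ⟨fun hn₅ => ?_, fun hn₈ => nonFeasible_of_lt ?_⟩
  · obtain rfl | rfl | rfl : n = 3 ∨ n = 4 ∨ n = 5 := by omega
    exacts [feasible_three, feasible_four, feasible_five]
  · simpa [sum_range] using sq_lt_sum_range_mul_sub hn₈

end
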